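/- Let α ∈ (1,2), λ ≥ 0 and ξ ∈ ℝ. Then, with z^α the principal branch of the complex power, (λ + iξ)^α + (λ − iξ)^α − 2λ^α = −(α(α−1)/Γ(2−α)) · ∫₀^∞ 4·sin²(ξy/2) · e^{−λy} · y^{−α−1} dy. In particular −((λ + iξ)^α + (λ − iξ)^α − 2λ^α) is a nonnegative real number, and it is strictly positive whenever ξ ≠ 0. -/

import Mathlib

open Complex MeasureTheory

/- Let `h y` be the second difference of `u ↦ e ^ (-u y)` with nodes `lam ± iξ`, `lam`; it equals
`-4 sin² (ξ y / 2) e ^ (-lam y)` and so vanishes to second order at `y = 0`. For `lam > 0`,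
evaluate `∫ y ^ (1 - α) h'' y dy` in two ways. Euler's integral with complex rate `u` turns it into
`Γ(2 - α)` times the second difference of `u ↦ u ^ α`, and two integrations by parts, with no
boundary terms, turn it into `α (α - 1) ∫ y ^ (-α - 1) h y dy`. Both sides of the resulting identity
are continuous as `lam → 0+`. -/

section LaplaceGamma

open Set Filter Topology

variable {a z : ℂ}

lemma norm_cpow_mul_exp_neg_mul {t : ℝ} (ht : 0 < t) :
    ‖(t : ℂ) ^ a * cexp (-(z * t))‖ = t ^ a.re * Real.exp (-z.re * t) := by
  rw [norm_mul, norm_cpow_eq_rpow_re_of_pos ht, Complex.norm_exp, neg_re, re_mul_ofReal, neg_mul]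

lemma integrableOn_cpow_mul_exp_neg_mul_Ioi (ha : -1 < a.re) (hz : 0 < z.re) :
    IntegrableOn (fun t : ℝ => (t : ℂ) ^ a * cexp (-(z * t))) (Ioi 0) := by
  have hdom : IntegrableOn (fun t : ℝ => t ^ a.re * Real.exp (-z.re * t)) (Ioi 0) := by
    simpa only [Real.rpow_one] using
      integrableOn_rpow_mul_exp_neg_mul_rpow (p := 1) ha one_pos hz
  refine hdom.mono' (Measurable.aestronglyMeasurable (by fun_prop)) ?_
  exact ae_restrict_of_forall_mem measurableSet_Ioi fun t ht => (norm_cpow_mul_exp_neg_mul ht).le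

lemma differentiableAt_integral_cpow_mul_exp_neg_mul_Ioi (ha : -1 < a.re) (hz : 0 < z.re) :
    DifferentiableAt ℂ (fun w : ℂ => ∫ t in Ioi (0 : ℝ), (t : ℂ) ^ a * cexp (-(w * t))) z := by
  have hdom : IntegrableOn (fun t : ℝ => t * (t ^ a.re * Real.exp (-(z.re / 2) * t))) (Ioi 0) := by
    have hint := integrableOn_rpow_mul_exp_neg_mul_rpow (p := 1) (s := a.re + 1) (b := z.re / 2)
      (by linarith) one_pos (by linarith)
    refine hint.congr_fun (fun t (ht : 0 < t) => ?_) measurableSet_Ioi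
    simp only [Real.rpow_one, Real.rpow_add_one ht.ne']
    ring
  have hhalf : {w : ℂ | z.re / 2 < w.re} ∈ 𝓝 z :=
    (isOpen_lt continuous_const continuous_re).mem_nhds (half_lt_self hz)
  refine (hasDerivAt_integral_of_dominated_loc_of_deriv_le hhalf
    (F := fun w (t : ℝ) => (t : ℂ) ^ a * cexp (-(w * t)))
    (F' := fun w (t : ℝ) => -(t : ℂ) * ((t : ℂ) ^ a * cexp (-(w * t))))
    (Eventually.of_forall fun w => Measurable.aestronglyMeasurable (by fun_prop))
    (integrableOn_cpow_mul_exp_neg_mul_Ioi ha hz)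
    (Measurable.aestronglyMeasurable (by fun_prop)) ?_ hdom ?_).2.differentiableAt
  · refine ae_restrict_of_forall_mem measurableSet_Ioi
      fun t (ht : 0 < t) w (hw : z.re / 2 < w.re) => ?_
    rw [norm_mul, norm_neg, norm_real, Real.norm_of_nonneg ht.le, norm_cpow_mul_exp_neg_mul ht]
    gcongr
  · refine Eventually.of_forall fun t w _ => ?_
    have hexp : HasDerivAt (fun w : ℂ => cexp (-(w * t))) (cexp (-(w * t)) * -(1 * (t : ℂ))) w :=
      ((hasDerivAt_id w).mul_const (t : ℂ)).neg.cexp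
    exact (hexp.const_mul ((t : ℂ) ^ a)).congr_deriv (by ring)

-- Both sides are analytic in `z` and agree for `z` real, where the formula is a rescaling of
-- Euler's integral.
lemma integral_cpow_mul_exp_neg_mul_Ioi_of_re_pos (ha : 0 < a.re) (hz : 0 < z.re) :
    ∫ t in Ioi (0 : ℝ), (t : ℂ) ^ (a - 1) * cexp (-(z * t)) = z ^ (-a) * Complex.Gamma a := by
  have hopen : IsOpen {w : ℂ | 0 < w.re} := isOpen_lt continuous_const continuous_re
  have hleft : AnalyticOnNhd ℂ (fun w : ℂ => ∫ t in Ioi (0 : ℝ),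
      (t : ℂ) ^ (a - 1) * cexp (-(w * t))) {w | 0 < w.re} :=
    DifferentiableOn.analyticOnNhd (fun w hw =>
      (differentiableAt_integral_cpow_mul_exp_neg_mul_Ioi (by simpa using ha)
        hw).differentiableWithinAt) hopen
  have hright : AnalyticOnNhd ℂ (fun w : ℂ => w ^ (-a) * Complex.Gamma a) {w | 0 < w.re} :=
    DifferentiableOn.analyticOnNhd (fun w hw =>
      ((differentiableAt_id.cpow_const (Or.inl hw)).mul_const _).differentiableWithinAt) hopen
  have hreal : ∀ r : ℝ, 0 < r → ∫ t in Ioi (0 : ℝ), (t : ℂ) ^ (a - 1) * cexp (-(r * t)) =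
      (r : ℂ) ^ (-a) * Complex.Gamma a := fun r hr => by
    have harg : (r : ℂ).arg ≠ Real.pi := by
      rw [arg_ofReal_of_nonneg hr.le]; exact Real.pi_ne_zero.symm
    rw [integral_cpow_mul_exp_neg_mul_Ioi ha hr, one_div, inv_cpow _ _ harg, cpow_neg]
  have hpunctured : Tendsto ((↑) : ℝ → ℂ) (𝓝[≠] 1) (𝓝[≠] ((1 : ℝ) : ℂ)) :=
    tendsto_nhdsWithin_of_tendsto_nhds_of_eventually_within _
      (continuous_ofReal.continuousAt.tendsto.mono_left nhdsWithin_le_nhds)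
      (eventually_nhdsWithin_of_forall fun r hr => ofReal_injective.ne hr)
  refine hleft.eqOn_of_preconnected_of_frequently_eq hright
    (convex_halfSpace_re_gt 0).isPreconnected (z₀ := ((1 : ℝ) : ℂ)) (by simp) ?_ hz
  refine hpunctured.frequently (Eventually.frequently ?_)
  filter_upwards [nhdsWithin_le_nhds (lt_mem_nhds one_pos)] with r hr using hreal r hr

end LaplaceGamma

section IntegrationByParts

open Set Filter Topology Asymptotics

variable {E : Type*} [NormedAddCommGroup E] [NormedSpace ℝ E]

lemma integral_Ioi_of_hasDerivAt_of_tendsto_nhdsGT [CompleteSpace E] {f f' : ℝ → E} {a : ℝ}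
    {l m : E} (hderiv : ∀ x ∈ Ioi a, HasDerivAt f (f' x) x) (hint : IntegrableOn f' (Ioi a))
    (hbot : Tendsto f (𝓝[>] a) (𝓝 l)) (htop : Tendsto f atTop (𝓝 m)) :
    ∫ x in Ioi a, f' x = m - l := by
  have hupdate : ∀ {x}, x ≠ a → Function.update f a l x = f x := fun hx =>
    Function.update_of_ne hx l f
  have hderiv' : ∀ x ∈ Ioi a, HasDerivAt (Function.update f a l) (f' x) x := fun x hx =>
    (hderiv x hx).congr_of_eventuallyEq ((eventually_ne_nhds (ne_of_gt hx)).mono fun _ => hupdate)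
  simpa only [Function.update_self] using integral_Ioi_of_hasDerivAt_of_tendsto
    (continuousWithinAt_update_same.mpr (by rwa [Ici_sdiff_left])) hderiv' hint
    (htop.congr' ((eventually_ne_atTop a).mono fun _ hx => (hupdate hx).symm))

lemma tendsto_rpow_smul_nhdsGT_zero_of_isBigO {f : ℝ → E} {s : ℝ} {n : ℕ}
    (hf : f =O[𝓝[>] 0] fun y => y ^ n) (hs : 0 < s + n) :
    Tendsto (fun y => y ^ s • f y) (𝓝[>] 0) (𝓝 0) := by
  have hprod : (fun y => y ^ s • f y) =O[𝓝[>] 0] fun y => y ^ (s + n) := by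
    refine ((isBigO_refl (fun y : ℝ => y ^ s) (𝓝[>] 0)).smul hf).congr' .rfl ?_
    filter_upwards [self_mem_nhdsWithin] with y hy
    rw [Real.rpow_add hy, Real.rpow_natCast, smul_eq_mul]
  refine hprod.trans_tendsto ?_
  simpa only [Real.zero_rpow hs.ne'] using
    (Real.continuousAt_rpow_const 0 (s + n) (Or.inr hs.le)).tendsto.mono_left nhdsWithin_le_nhds

/- Integrating by parts twice at once, through the primitive `y ^ (1 - α) h' + (α - 1) y ^ (-α) h`;
this avoids the intermediate integral of `y ^ (-α) h'` and the division by `α (α - 1)`. -/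
lemma integral_rpow_smul_secondDeriv_Ioi [CompleteSpace E] {h h' h'' : ℝ → E} {α : ℝ}
    (hh : ∀ y ∈ Ioi (0 : ℝ), HasDerivAt h (h' y) y)
    (hh' : ∀ y ∈ Ioi (0 : ℝ), HasDerivAt h' (h'' y) y)
    (hint : IntegrableOn (fun y => y ^ (-α - 1) • h y) (Ioi 0))
    (hint'' : IntegrableOn (fun y => y ^ (1 - α) • h'' y) (Ioi 0))
    (hzero : Tendsto (fun y => y ^ (-α) • h y) (𝓝[>] 0) (𝓝 0))
    (hzero' : Tendsto (fun y => y ^ (1 - α) • h' y) (𝓝[>] 0) (𝓝 0))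
    (htop : Tendsto (fun y => y ^ (-α) • h y) atTop (𝓝 0))
    (htop' : Tendsto (fun y => y ^ (1 - α) • h' y) atTop (𝓝 0)) :
    ∫ y in Ioi (0 : ℝ), y ^ (1 - α) • h'' y =
      (α * (α - 1)) • ∫ y in Ioi (0 : ℝ), y ^ (-α - 1) • h y := by
  let G : ℝ → E := fun y => y ^ (1 - α) • h' y + (α - 1) • (y ^ (-α) • h y)
  have hderiv : ∀ y ∈ Ioi (0 : ℝ), HasDerivAt G
      (y ^ (1 - α) • h'' y - (α * (α - 1)) • (y ^ (-α - 1) • h y)) y := fun y hy => by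
    have hpow := Real.hasDerivAt_rpow_const (x := y) (p := -α) (Or.inl (ne_of_gt hy))
    have hpow' := Real.hasDerivAt_rpow_const (x := y) (p := 1 - α) (Or.inl (ne_of_gt hy))
    refine ((hpow'.smul (hh' y hy)).add ((hpow.smul (hh y hy)).const_smul (α - 1))).congr_deriv ?_
    rw [show 1 - α - 1 = -α by ring]
    module
  have hlim : ∀ {l : Filter ℝ}, Tendsto (fun y => y ^ (-α) • h y) l (𝓝 0) →
      Tendsto (fun y => y ^ (1 - α) • h' y) l (𝓝 0) → Tendsto G l (𝓝 0) := fun h₀ h₁ => by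
    simpa only [smul_zero, add_zero] using h₁.add (h₀.const_smul (α - 1))
  have hintα : IntegrableOn (fun y => (α * (α - 1)) • (y ^ (-α - 1) • h y)) (Ioi 0) :=
    Integrable.smul _ hint
  have hFTC := integral_Ioi_of_hasDerivAt_of_tendsto_nhdsGT hderiv (hint''.sub hintα)
    (hlim hzero hzero') (hlim htop htop')
  rw [integral_sub hint'' hintα, integral_smul, sub_zero] at hFTC
  exact sub_eq_zero.mp hFTC

end IntegrationByParts

section VerticalSecondDiff

open Set Filter Topology

/-- The second difference of `f` at `lam`, with step `ξ` in the imaginary direction. Applied to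
`z ↦ z ^ α` it is, up to sign, the symbol of the tempered fractional Laplacian. -/
noncomputable def verticalSecondDiff (f : ℂ → ℂ) (lam ξ : ℝ) : ℂ :=
  f (lam + I * ξ) + f (lam - I * ξ) - 2 * f lam

variable {lam ξ : ℝ}

lemma verticalSecondDiff_congr {f g : ℂ → ℂ} (h : ∀ u : ℂ, u.re = lam → f u = g u) :
    verticalSecondDiff f lam ξ = verticalSecondDiff g lam ξ := by
  rw [verticalSecondDiff, h _ (by simp), h _ (by simp), h _ (ofReal_re lam), verticalSecondDiff]

lemma verticalSecondDiff_const_mul (c : ℂ) (f : ℂ → ℂ) :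
    verticalSecondDiff (fun u => c * f u) lam ξ = c * verticalSecondDiff f lam ξ := by
  simp only [verticalSecondDiff]
  ring

lemma hasDerivAt_verticalSecondDiff {F : ℂ → ℝ → ℂ} {F' : ℂ → ℂ} {y : ℝ}
    (hF : ∀ u : ℂ, u.re = lam → HasDerivAt (F u) (F' u) y) :
    HasDerivAt (fun y => verticalSecondDiff (F · y) lam ξ) (verticalSecondDiff F' lam ξ) y :=
  ((hF _ (by simp)).add (hF _ (by simp))).sub ((hF _ (ofReal_re lam)).const_mul 2)

lemma tendsto_verticalSecondDiff_zero {ι : Type*} {l : Filter ι} {F : ℂ → ι → ℂ}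
    (hF : ∀ u : ℂ, u.re = lam → Tendsto (F u) l (𝓝 0)) :
    Tendsto (fun i => verticalSecondDiff (F · i) lam ξ) l (𝓝 0) := by
  simpa only [verticalSecondDiff, add_zero, mul_zero, sub_zero] using
    ((hF _ (by simp)).add (hF _ (by simp))).sub ((hF _ (ofReal_re lam)).const_mul 2)

lemma continuousOn_verticalSecondDiff {f : ℂ → ℂ} {s : Set ℝ}
    (hf : ContinuousOn f {u : ℂ | u.re ∈ s}) :
    ContinuousOn (fun l => verticalSecondDiff f l ξ) s := by
  refine ((hf.comp ?_ ?_).add (hf.comp ?_ ?_)).sub (continuousOn_const.mul (hf.comp ?_ ?_)) <;>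
    first | fun_prop | exact fun l hl => by simpa using hl

section Integral

variable {X : Type*} [MeasurableSpace X] {μ : Measure X} {F : ℂ → X → ℂ}

lemma integrable_verticalSecondDiff (hF : ∀ u : ℂ, u.re = lam → Integrable (F u) μ) :
    Integrable (fun x => verticalSecondDiff (F · x) lam ξ) μ :=
  ((hF _ (by simp)).add (hF _ (by simp))).sub ((hF _ (ofReal_re lam)).const_mul 2)

lemma integral_verticalSecondDiff (hF : ∀ u : ℂ, u.re = lam → Integrable (F u) μ) :
    ∫ x, verticalSecondDiff (F · x) lam ξ ∂μ =
      verticalSecondDiff (fun u => ∫ x, F u x ∂μ) lam ξ := by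
  have hplus := hF (lam + I * ξ) (by simp)
  have hminus := hF (lam - I * ξ) (by simp)
  have hmid := (hF lam (ofReal_re lam)).const_mul 2
  have hsum : Integrable (fun x => F (lam + I * ξ) x + F (lam - I * ξ) x) μ := hplus.add hminus
  simp only [verticalSecondDiff]
  rw [integral_sub hsum hmid, integral_add hplus hminus, integral_const_mul]

end Integral

end VerticalSecondDiff

section TemperedOscillation

open Set Filter Topology Asymptotics

/-- The oscillation `4 sin² (ξ y / 2)`, exponentially tempered at rate `lam`: the integrand of the
theorem without its singular weight `y ^ (-α - 1)`. -/
noncomputable def temperedOscillation (lam ξ y : ℝ) : ℝ :=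
  4 * Real.sin (ξ * y / 2) ^ 2 * Real.exp (-(lam * y))

variable {α lam ξ : ℝ}

lemma continuous_temperedOscillation : Continuous (temperedOscillation lam ξ) := by
  unfold temperedOscillation; fun_prop

lemma temperedOscillation_nonneg (lam ξ y : ℝ) : 0 ≤ temperedOscillation lam ξ y := by
  unfold temperedOscillation; positivity

lemma temperedOscillation_le_four_mul_exp (lam ξ y : ℝ) :
    temperedOscillation lam ξ y ≤ 4 * Real.exp (-(lam * y)) := by
  unfold temperedOscillation
  gcongr
  linarith [Real.sin_sq_le_one (ξ * y / 2)]

lemma antitone_temperedOscillation {y : ℝ} (hy : 0 ≤ y) :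
    Antitone (temperedOscillation · ξ y) := fun l m hlm => by
  dsimp only [temperedOscillation]
  gcongr

lemma temperedOscillation_mul_rpow_nonneg {y : ℝ} (hy : 0 ≤ y) (s : ℝ) :
    0 ≤ temperedOscillation lam ξ y * y ^ s :=
  mul_nonneg (temperedOscillation_nonneg lam ξ y) (Real.rpow_nonneg hy s)

lemma temperedOscillation_pos {y : ℝ} (hξ : ξ ≠ 0) (hy : y ∈ Ioo 0 (2 * Real.pi / |ξ|)) :
    0 < temperedOscillation lam ξ y := by
  have hξ' : 0 < |ξ| := abs_pos.mpr hξ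
  have hlt : |ξ * y / 2| < Real.pi := by
    have := (lt_div_iff₀ hξ').mp hy.2
    rw [abs_div, abs_mul, abs_two, abs_of_pos hy.1]
    linarith
  have hne : ξ * y / 2 ≠ 0 := by
    have := hy.1.ne'
    positivity
  have hsin : Real.sin (ξ * y / 2) ≠ 0 := by
    rwa [Ne, Real.sin_eq_zero_iff_of_lt_of_lt (abs_lt.mp hlt).1 (abs_lt.mp hlt).2]
  unfold temperedOscillation
  positivity

lemma isBigO_temperedOscillation_nhds_zero :
    temperedOscillation lam ξ =O[𝓝 0] fun y => y ^ 2 := by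
  have hsin : (fun y => Real.sin (ξ * y / 2)) =O[𝓝 0] fun y => y := by
    refine IsBigO.of_bound (|ξ| / 2) (Eventually.of_forall fun y => ?_)
    calc |Real.sin (ξ * y / 2)| ≤ |ξ * y / 2| := Real.abs_sin_le_abs
      _ = |ξ| / 2 * |y| := by rw [abs_div, abs_mul, abs_two]; ring
  have hexp : (fun y => Real.exp (-(lam * y))) =O[𝓝 0] fun _ => (1 : ℝ) :=
    Continuous.tendsto (by fun_prop) 0 |>.isBigO_one ℝ
  simpa only [temperedOscillation, mul_one] using! ((hsin.pow 2).const_mul_left 4).mul hexp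

lemma isBigO_temperedOscillation_atTop (hlam : 0 ≤ lam) (hα : lam = 0 → 0 < α) :
    ∃ b > -α, temperedOscillation lam ξ =O[atTop] fun y => y ^ (-b) := by
  have hexp : temperedOscillation lam ξ =O[atTop] fun y => Real.exp (-lam * y) :=
    IsBigO.of_bound 4 (Eventually.of_forall fun y => by
      rw [Real.norm_of_nonneg (temperedOscillation_nonneg lam ξ y), Real.norm_eq_abs, Real.abs_exp,
        neg_mul]
      exact temperedOscillation_le_four_mul_exp lam ξ y)
  rcases hlam.eq_or_lt with rfl | hpos
  · exact ⟨0, neg_neg_of_pos (hα rfl), by simpa using hexp⟩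
  · exact ⟨-α + 1, lt_add_one _,
      hexp.trans (isLittleO_exp_neg_mul_rpow_atTop hpos _).isBigO⟩

lemma integrableOn_temperedOscillation_mul_rpow (hα : α < 2) (hlam : 0 ≤ lam)
    (hα₀ : lam = 0 → 0 < α) :
    IntegrableOn (fun y => temperedOscillation lam ξ y * y ^ (-α - 1)) (Ioi 0) := by
  obtain ⟨b, hb, htop⟩ := isBigO_temperedOscillation_atTop (ξ := ξ) hlam hα₀
  have hzero : temperedOscillation lam ξ =O[𝓝[>] 0] fun y => y ^ (-(-2) : ℝ) := by
    simpa only [neg_neg, Real.rpow_two] using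
      isBigO_temperedOscillation_nhds_zero.mono nhdsWithin_le_nhds
  simpa only [mul_comm] using mellin_convergent_of_isBigO_scalar
    (continuous_temperedOscillation.locallyIntegrable.locallyIntegrableOn _) htop hb hzero
    (by linarith : -2 < -α)

lemma integral_temperedOscillation_mul_rpow_nonneg (lam ξ s : ℝ) :
    0 ≤ ∫ y in Ioi (0 : ℝ), temperedOscillation lam ξ y * y ^ s :=
  setIntegral_nonneg measurableSet_Ioi fun _ hy =>
    temperedOscillation_mul_rpow_nonneg (le_of_lt hy) s

lemma integral_temperedOscillation_mul_rpow_pos (hα : α < 2) (hlam : 0 ≤ lam)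
    (hα₀ : lam = 0 → 0 < α) (hξ : ξ ≠ 0) :
    0 < ∫ y in Ioi (0 : ℝ), temperedOscillation lam ξ y * y ^ (-α - 1) := by
  rw [setIntegral_pos_iff_support_of_nonneg_ae
    (ae_restrict_of_forall_mem measurableSet_Ioi fun y hy =>
      temperedOscillation_mul_rpow_nonneg (le_of_lt hy) _)
    (integrableOn_temperedOscillation_mul_rpow hα hlam hα₀)]
  have hperiod : 0 < 2 * Real.pi / |ξ| := by positivity
  have hsub : Ioo 0 (2 * Real.pi / |ξ|) ⊆
      Function.support (fun y => temperedOscillation lam ξ y * y ^ (-α - 1)) ∩ Ioi 0 :=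
    fun y hy => ⟨(mul_pos (temperedOscillation_pos hξ hy) (Real.rpow_pos_of_pos hy.1 _)).ne', hy.1⟩
  exact (isOpen_Ioo.measure_pos volume (nonempty_Ioo.mpr hperiod)).trans_le (measure_mono hsub)

lemma continuousOn_integral_temperedOscillation_mul_rpow (hα : α ∈ Ioo 0 2) :
    ContinuousOn (fun l => ∫ y in Ioi (0 : ℝ), temperedOscillation l ξ y * y ^ (-α - 1))
      (Ici 0) := by
  refine continuousOn_of_dominated (fun l _ => ?_) (fun l hl => ?_)
    (integrableOn_temperedOscillation_mul_rpow (ξ := ξ) hα.2 le_rfl fun _ => hα.1) ?_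
  · exact (continuous_temperedOscillation.measurable.mul
      (measurable_id.pow_const _)).aestronglyMeasurable
  · refine ae_restrict_of_forall_mem measurableSet_Ioi fun y (hy : 0 < y) => ?_
    rw [Real.norm_of_nonneg (temperedOscillation_mul_rpow_nonneg hy.le _)]
    exact mul_le_mul_of_nonneg_right (antitone_temperedOscillation hy.le hl) (by positivity)
  · refine Eventually.of_forall fun y => ?_
    unfold temperedOscillation
    fun_prop

end TemperedOscillation

section ExpSecondDiff

open Set Filter Topology Asymptotics

/-- The `n`-th derivative in `y` of the second difference of `u ↦ e ^ (-u y)`. -/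
noncomputable def expSecondDiff (n : ℕ) (lam ξ y : ℝ) : ℂ :=
  verticalSecondDiff (fun u => (-u) ^ n * cexp (-(u * y))) lam ξ

variable {α lam ξ : ℝ}

lemma expSecondDiff_zero (lam ξ y : ℝ) :
    expSecondDiff 0 lam ξ y = -(temperedOscillation lam ξ y : ℂ) := by
  have hplus : cexp (-((lam + I * ξ) * y)) = cexp (-(lam * y)) * cexp (-(ξ * y) * I) := by
    rw [← Complex.exp_add]; ring_nf
  have hminus : cexp (-((lam - I * ξ) * y)) = cexp (-(lam * y)) * cexp (ξ * y * I) := by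
    rw [← Complex.exp_add]; ring_nf
  have hcos : cexp (ξ * y * I) + cexp (-(ξ * y) * I) = 2 - 4 * Complex.sin (ξ * y / 2) ^ 2 := by
    rw [← two_cos, show (ξ * y : ℂ) = 2 * (ξ * y / 2) by ring, Complex.cos_two_mul,
      Complex.cos_sq']
    ring_nf
  simp only [expSecondDiff, verticalSecondDiff, pow_zero, one_mul, temperedOscillation]
  rw [hplus, hminus]
  push_cast
  linear_combination cexp (-(lam * y)) * hcos

lemma expSecondDiff_one_apply_zero (lam ξ : ℝ) : expSecondDiff 1 lam ξ 0 = 0 := by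
  simp only [expSecondDiff, verticalSecondDiff, ofReal_zero, mul_zero, neg_zero, Complex.exp_zero]
  ring

lemma hasDerivAt_expSecondDiff (n : ℕ) (lam ξ y : ℝ) :
    HasDerivAt (expSecondDiff n lam ξ) (expSecondDiff (n + 1) lam ξ y) y := by
  refine hasDerivAt_verticalSecondDiff fun u _ => ?_
  have hlin : HasDerivAt (fun y : ℝ => -(u * y)) (-(u * 1)) y :=
    ((hasDerivAt_id y).ofReal_comp.const_mul u).neg
  exact (hlin.cexp.const_mul ((-u) ^ n)).congr_deriv (by ring)

lemma isBigO_expSecondDiff_zero : expSecondDiff 0 lam ξ =O[𝓝 0] fun y => y ^ 2 := by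
  refine IsBigO.of_norm_left ?_
  simpa only [expSecondDiff_zero, norm_neg, norm_real] using
    (isBigO_temperedOscillation_nhds_zero (lam := lam) (ξ := ξ)).norm_left

lemma isBigO_expSecondDiff_one : expSecondDiff 1 lam ξ =O[𝓝 0] fun y => y ^ 1 := by
  simpa only [expSecondDiff_one_apply_zero, sub_zero, pow_one] using
    (hasDerivAt_expSecondDiff 1 lam ξ 0).isBigO_sub

lemma rpow_smul_expSecondDiff (s : ℝ) (n : ℕ) (lam ξ y : ℝ) :
    y ^ s • expSecondDiff n lam ξ y =
      verticalSecondDiff (fun u => y ^ s • ((-u) ^ n * cexp (-(u * y)))) lam ξ := by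
  simp only [real_smul, verticalSecondDiff_const_mul, expSecondDiff]

lemma tendsto_rpow_smul_expSecondDiff_atTop (hlam : 0 < lam) (s : ℝ) (n : ℕ) :
    Tendsto (fun y => y ^ s • expSecondDiff n lam ξ y) atTop (𝓝 0) := by
  simp only [rpow_smul_expSecondDiff]
  refine tendsto_verticalSecondDiff_zero fun u hu => ?_
  have hreal := (tendsto_rpow_mul_exp_neg_mul_atTop_nhds_zero s lam hlam).const_mul (‖u‖ ^ n)
  rw [mul_zero] at hreal
  refine tendsto_zero_iff_norm_tendsto_zero.mpr (hreal.congr' ?_)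
  filter_upwards [eventually_gt_atTop 0] with y hy
  rw [norm_smul, norm_mul, norm_pow, norm_neg, Complex.norm_exp, neg_re, re_mul_ofReal, hu,
    Real.norm_of_nonneg (Real.rpow_nonneg hy.le s), neg_mul]
  ring

lemma rpow_smul_pow_mul_exp {s y : ℝ} (hy : 0 < y) (n : ℕ) (u : ℂ) :
    y ^ s • ((-u) ^ n * cexp (-(u * y))) = (-u) ^ n * ((y : ℂ) ^ (s : ℂ) * cexp (-(u * y))) := by
  rw [real_smul, ofReal_cpow hy.le]
  ring

lemma integrableOn_rpow_smul_pow_mul_exp {s : ℝ} {u : ℂ} (hs : -1 < s) (hu : 0 < u.re) (n : ℕ) :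
    IntegrableOn (fun y : ℝ => y ^ s • ((-u) ^ n * cexp (-(u * y)))) (Ioi 0) :=
  IntegrableOn.congr_fun
    ((integrableOn_cpow_mul_exp_neg_mul_Ioi (by simpa using hs) hu).const_mul ((-u) ^ n))
    (fun _ hy => (rpow_smul_pow_mul_exp hy n u).symm) measurableSet_Ioi

lemma integral_rpow_smul_sq_mul_exp {u : ℂ} (hα : α < 2) (hu : 0 < u.re) :
    ∫ y in Ioi (0 : ℝ), y ^ (1 - α) • ((-u) ^ 2 * cexp (-(u * y))) =
      Real.Gamma (2 - α) * u ^ (α : ℂ) := by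
  have hu₀ : u ≠ 0 := by rintro rfl; simp at hu
  have hexponent : ((1 - α : ℝ) : ℂ) = (2 - α : ℝ) - 1 := by push_cast; ring
  have hpow : u ^ 2 * u ^ (-(2 - α : ℝ) : ℂ) = u ^ (α : ℂ) := by
    rw [← cpow_ofNat, ← cpow_add _ _ hu₀]
    push_cast
    ring_nf
  rw [setIntegral_congr_fun measurableSet_Ioi fun y hy => rpow_smul_pow_mul_exp hy 2 u,
    integral_const_mul, hexponent,
    integral_cpow_mul_exp_neg_mul_Ioi_of_re_pos (by simpa using hα) hu, neg_sq, ← mul_assoc, hpow,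
    Gamma_ofReal, mul_comm]

lemma integrableOn_rpow_smul_expSecondDiff {s : ℝ} (hs : -1 < s) (hlam : 0 < lam) (n : ℕ) :
    IntegrableOn (fun y => y ^ s • expSecondDiff n lam ξ y) (Ioi 0) := by
  simp only [rpow_smul_expSecondDiff]
  exact integrable_verticalSecondDiff fun u hu =>
    integrableOn_rpow_smul_pow_mul_exp hs (hu ▸ hlam) n

lemma integral_rpow_smul_expSecondDiff_two (hα : α < 2) (hlam : 0 < lam) :
    ∫ y in Ioi (0 : ℝ), y ^ (1 - α) • expSecondDiff 2 lam ξ y =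
      Real.Gamma (2 - α) * verticalSecondDiff (· ^ (α : ℂ)) lam ξ := by
  simp only [rpow_smul_expSecondDiff]
  rw [integral_verticalSecondDiff fun u hu =>
      integrableOn_rpow_smul_pow_mul_exp (by linarith) (hu ▸ hlam) 2,
    ← verticalSecondDiff_const_mul]
  exact verticalSecondDiff_congr fun u hu => integral_rpow_smul_sq_mul_exp hα (hu ▸ hlam)

lemma rpow_smul_expSecondDiff_zero (s lam ξ y : ℝ) :
    y ^ s • expSecondDiff 0 lam ξ y = ((-(temperedOscillation lam ξ y * y ^ s) : ℝ) : ℂ) := by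
  rw [expSecondDiff_zero, real_smul]
  push_cast
  ring

lemma integral_rpow_smul_expSecondDiff_two_eq_integral_temperedOscillation
    (hα : α < 2) (hlam : 0 < lam) :
    ∫ y in Ioi (0 : ℝ), y ^ (1 - α) • expSecondDiff 2 lam ξ y =
      ((-(α * (α - 1) * ∫ y in Ioi (0 : ℝ), temperedOscillation lam ξ y * y ^ (-α - 1)) : ℝ) :
        ℂ) := by
  have hint : IntegrableOn (fun y => y ^ (-α - 1) • expSecondDiff 0 lam ξ y) (Ioi 0) := by
    simp only [rpow_smul_expSecondDiff_zero]
    exact (integrableOn_temperedOscillation_mul_rpow hα hlam.le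
      fun h => absurd h hlam.ne').neg.ofReal
  rw [integral_rpow_smul_secondDeriv_Ioi (fun y _ => hasDerivAt_expSecondDiff 0 lam ξ y)
    (fun y _ => hasDerivAt_expSecondDiff 1 lam ξ y) hint
    (integrableOn_rpow_smul_expSecondDiff (by linarith) hlam 2)
    (tendsto_rpow_smul_nhdsGT_zero_of_isBigO
      (isBigO_expSecondDiff_zero.mono nhdsWithin_le_nhds) (by push_cast; linarith))
    (tendsto_rpow_smul_nhdsGT_zero_of_isBigO
      (isBigO_expSecondDiff_one.mono nhdsWithin_le_nhds) (by push_cast; linarith))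
    (tendsto_rpow_smul_expSecondDiff_atTop hlam _ 0)
    (tendsto_rpow_smul_expSecondDiff_atTop hlam _ 1)]
  simp only [rpow_smul_expSecondDiff_zero]
  rw [integral_complex_ofReal, integral_neg, real_smul]
  push_cast
  ring

end ExpSecondDiff

section Symbol

open Set

variable {α lam ξ : ℝ}

lemma verticalSecondDiff_cpow_of_pos (hα : α < 2) (hlam : 0 < lam) :
    verticalSecondDiff (· ^ (α : ℂ)) lam ξ =
      ((-(α * (α - 1) / Real.Gamma (2 - α) *
        ∫ y in Ioi (0 : ℝ), temperedOscillation lam ξ y * y ^ (-α - 1)) : ℝ) : ℂ) := by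
  have hΓ : (Real.Gamma (2 - α) : ℂ) ≠ 0 :=
    ofReal_ne_zero.mpr (Real.Gamma_pos_of_pos (by linarith)).ne'
  refine mul_left_cancel₀ hΓ ?_
  rw [← integral_rpow_smul_expSecondDiff_two hα hlam,
    integral_rpow_smul_expSecondDiff_two_eq_integral_temperedOscillation hα hlam]
  push_cast
  field_simp

lemma continuousOn_verticalSecondDiff_cpow (hα : 0 < α) :
    ContinuousOn (fun l => verticalSecondDiff (· ^ (α : ℂ)) l ξ) (Ici 0) :=
  continuousOn_verticalSecondDiff fun _ hu =>
    (continuousAt_cpow_const_of_re_pos (Or.inl hu) (by simpa using hα)).continuousWithinAt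

lemma verticalSecondDiff_cpow (hα : α < 2) (hlam : 0 ≤ lam) (hα₀ : lam = 0 → 0 < α) :
    verticalSecondDiff (· ^ (α : ℂ)) lam ξ =
      ((-(α * (α - 1) / Real.Gamma (2 - α) *
        ∫ y in Ioi (0 : ℝ), temperedOscillation lam ξ y * y ^ (-α - 1)) : ℝ) : ℂ) := by
  rcases hlam.eq_or_lt with rfl | hpos
  · have hcont := continuousOn_integral_temperedOscillation_mul_rpow (ξ := ξ) ⟨hα₀ rfl, hα⟩
    have heqOn : EqOn (fun l => verticalSecondDiff (· ^ (α : ℂ)) l ξ) _ (Ioi 0) := fun l hl =>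
      verticalSecondDiff_cpow_of_pos hα hl
    exact heqOn.of_subset_closure (continuousOn_verticalSecondDiff_cpow (hα₀ rfl))
      (continuous_ofReal.comp_continuousOn (continuousOn_const.mul hcont).neg)
      Ioi_subset_Ici_self (closure_Ioi 0).ge self_mem_Ici
  · exact verticalSecondDiff_cpow_of_pos hα hpos

end Symbol

theorem tempered_symbol_negativity_alpha_gt_one_general {α lam : ℝ} (ξ : ℝ)
    (hα : α < 2) (hlam : 0 ≤ lam) (hα₀ : lam = 0 → 0 < α) :
    ((lam : ℂ) + Complex.I * (ξ : ℂ)) ^ (α : ℂ)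
        + ((lam : ℂ) - Complex.I * (ξ : ℂ)) ^ (α : ℂ) - 2 * (lam : ℂ) ^ (α : ℂ) =
      ((-((α * (α - 1) / Real.Gamma (2 - α)) *
        ∫ y in Set.Ioi (0:ℝ), 4 * Real.sin (ξ*y/2)^2 * Real.exp (-(lam*y)) * y ^ (-α - 1)) : ℝ) :
          ℂ) ∧
    0 ≤ (∫ y in Set.Ioi (0:ℝ),
        4 * Real.sin (ξ*y/2)^2 * Real.exp (-(lam*y)) * y ^ (-α - 1)) ∧
    (ξ ≠ 0 → 0 < ∫ y in Set.Ioi (0:ℝ),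
        4 * Real.sin (ξ*y/2)^2 * Real.exp (-(lam*y)) * y ^ (-α - 1)) :=
  ⟨verticalSecondDiff_cpow hα hlam hα₀, integral_temperedOscillation_mul_rpow_nonneg lam ξ _,
    integral_temperedOscillation_mul_rpow_pos hα hlam hα₀⟩

/-- For `α ∈ (1,2)`, `λ ≥ 0` and `ξ ∈ ℝ`, with `z^α` the principal branch of the
complex power,
`(λ + iξ)^α + (λ − iξ)^α − 2λ^α = −(α(α−1)/Γ(2−α))·∫₀^∞ 4 sin²(ξy/2) e^{−λy} y^{−α−1} dy`;
in particular `−((λ + iξ)^α + (λ − iξ)^α − 2λ^α)` is a nonnegative real number,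
strictly positive for `ξ ≠ 0`. -/
theorem tempered_symbol_negativity_alpha_gt_one (α lam ξ : ℝ)
    (hα : α ∈ Set.Ioo (1:ℝ) 2) (hlam : 0 ≤ lam) :
    ((lam : ℂ) + Complex.I * (ξ : ℂ)) ^ (α : ℂ)
        + ((lam : ℂ) - Complex.I * (ξ : ℂ)) ^ (α : ℂ) - 2 * (lam : ℂ) ^ (α : ℂ) =
      ((-((α * (α - 1) / Real.Gamma (2 - α)) *
        ∫ y in Set.Ioi (0:ℝ), 4 * Real.sin (ξ*y/2)^2 * Real.exp (-(lam*y)) * y ^ (-α - 1)) : ℝ) : ℂ) ∧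
    0 ≤ (α * (α - 1) / Real.Gamma (2 - α)) *
        ∫ y in Set.Ioi (0:ℝ), 4 * Real.sin (ξ*y/2)^2 * Real.exp (-(lam*y)) * y ^ (-α - 1) ∧
    (ξ ≠ 0 → 0 < (α * (α - 1) / Real.Gamma (2 - α)) *
        ∫ y in Set.Ioi (0:ℝ), 4 * Real.sin (ξ*y/2)^2 * Real.exp (-(lam*y)) * y ^ (-α - 1)) := by
  have hcoeff : 0 < α * (α - 1) / Real.Gamma (2 - α) :=
    div_pos (by nlinarith [hα.1]) (Real.Gamma_pos_of_pos (by linarith [hα.2]))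
  have h := tempered_symbol_negativity_alpha_gt_one_general ξ hα.2 hlam fun _ =>
    one_pos.trans hα.1
  exact ⟨h.1, mul_nonneg hcoeff.le h.2.1, fun hξ => mul_pos hcoeff (h.2.2 hξ)⟩
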